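/- Let D ≥ 1, let e : Fin D → ℝ, and let x : Fin D → ℝ with Var(x) > 0, where N(y)_i = (y_i − μ(y))/sqrt(Var(y)). Then the function a ↦ N(a•x + e) tends to N(x) as a → +∞ (limit along the filter atTop in ℝ, in the space Fin D → ℝ). -/

import Mathlib

open Finset

/-- Empirical mean of a vector. -/
noncomputable def emean {D : ℕ} (x : Fin D → ℝ) : ℝ := (1 / (D : ℝ)) * ∑ i, x i

/-- Empirical variance of a vector. -/
noncomputable def evar {D : ℕ} (x : Fin D → ℝ) : ℝ :=
  (1 / (D : ℝ)) * ∑ i, (x i - emean x) ^ 2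

/-- LayerNorm normalization step. -/
noncomputable def nrm {D : ℕ} (x : Fin D → ℝ) : Fin D → ℝ :=
  fun i => (x i - emean x) / Real.sqrt (evar x)

/-- LayerNorm with per-channel parameters γ, β. -/
noncomputable def layerNorm {D : ℕ} (γ β : Fin D → ℝ) (x : Fin D → ℝ) : Fin D → ℝ :=
  fun i => γ i * nrm x i + β i

section ScaleInvariant

open Filter Topology

variable {𝕜 E : Type*} [Field 𝕜] [LinearOrder 𝕜] [IsStrictOrderedRing 𝕜] [TopologicalSpace 𝕜]
  [OrderTopology 𝕜] [AddCommGroup E] [Module 𝕜 E] [TopologicalSpace E] [ContinuousAdd E]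
  [ContinuousSMul 𝕜 E]

theorem tendsto_add_inv_smul_atTop (x e : E) :
    Tendsto (fun a : 𝕜 => x + a⁻¹ • e) atTop (𝓝 x) := by
  simpa only [zero_smul, add_zero] using
    ((tendsto_inv_atTop_zero (𝕜 := 𝕜)).smul_const e).const_add x

theorem tendsto_smul_add_atTop_of_pos_smul_invariant {F : Type*} [TopologicalSpace F]
    {f : E → F} {x : E} (hf : ContinuousAt f x)
    (hsmul : ∀ a : 𝕜, 0 < a → ∀ y, f (a • y) = f y) (e : E) :
    Tendsto (fun a : 𝕜 => f (a • x + e)) atTop (𝓝 (f x)) := by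
  have rescale : ∀ᶠ a : 𝕜 in atTop, f (x + a⁻¹ • e) = f (a • x + e) := by
    filter_upwards [eventually_gt_atTop 0] with a ha
    rw [← hsmul a ha, smul_add, smul_inv_smul₀ ha.ne']
  exact (hf.tendsto.comp (tendsto_add_inv_smul_atTop x e)).congr' rescale

end ScaleInvariant

section Normalization

variable {D : ℕ}

theorem emean_smul (a : ℝ) (x : Fin D → ℝ) : emean (a • x) = a * emean x := by
  simp only [emean, Pi.smul_apply, smul_eq_mul, ← mul_sum]
  ring

theorem evar_smul (a : ℝ) (x : Fin D → ℝ) : evar (a • x) = a ^ 2 * evar x := by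
  simp only [evar, emean_smul, Pi.smul_apply, smul_eq_mul, ← mul_sub, mul_pow, ← mul_sum]
  ring

theorem nrm_smul_of_pos {a : ℝ} (ha : 0 < a) (x : Fin D → ℝ) : nrm (a • x) = nrm x := by
  funext i
  have sqrt_evar_smul : √(evar (a • x)) = a * √(evar x) := by
    rw [evar_smul, Real.sqrt_mul (sq_nonneg a), Real.sqrt_sq ha.le]
  calc
    nrm (a • x) i = (a * (x i - emean x)) / (a * √(evar x)) := by
      simp only [nrm, sqrt_evar_smul, emean_smul, Pi.smul_apply, smul_eq_mul, mul_sub]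
    _ = nrm x i := mul_div_mul_left _ _ ha.ne'

@[fun_prop]
theorem continuous_emean : Continuous (emean : (Fin D → ℝ) → ℝ) := by
  unfold emean
  fun_prop

@[fun_prop]
theorem continuous_evar : Continuous (evar : (Fin D → ℝ) → ℝ) := by
  unfold evar
  fun_prop

theorem continuousAt_nrm {x : Fin D → ℝ} (hx : 0 < evar x) : ContinuousAt nrm x :=
  continuousAt_pi.2 fun i =>
    ((continuous_apply i).sub continuous_emean).continuousAt.div
      continuous_evar.sqrt.continuousAt (Real.sqrt_pos.2 hx).ne'

end Normalization

theorem stmt_7 {D : ℕ} (hD : 1 ≤ D) (e x : Fin D → ℝ) (hx : 0 < evar x) :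
    Filter.Tendsto (fun a : ℝ => nrm (a • x + e)) Filter.atTop (nhds (nrm x)) :=
  tendsto_smul_add_atTop_of_pos_smul_invariant (continuousAt_nrm hx)
    (fun _ ha y => nrm_smul_of_pos ha y) e
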